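/- Let τ ∈ ℝ_{<0}. For every z ∈ ℂ with |Re(z)| < 1 − τ^{-1} and |Re(z+2)| < 1 − τ^{-1}, the hyperbolic gamma function satisfies the first order difference equation G_τ(z+2) = 2·cos(π(z+1)τ/2)·G_τ(z). (Here q^u denotes exp(2πiτu).) -/

import Mathlib

noncomputable section

open Complex MeasureTheory Set

/-- The integrand of Ruijsenaars' hyperbolic gamma function. -/
def hypInt (τ : ℝ) (z : ℂ) (y : ℝ) : ℂ :=
  (z / (y : ℂ) -
      Complex.sinh ((τ : ℂ) * (y : ℂ) * z) /
        (Complex.sinh (y : ℂ) * Complex.sinh ((τ : ℂ) * (y : ℂ)))) / (y : ℂ)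

/-- `γ_τ(z) = (1/(2i))·∫_0^∞ ( z/y − sinh(τyz)/(sinh(y)·sinh(τy)) ) dy/y`. -/
def hypGammaArg (τ : ℝ) (z : ℂ) : ℂ :=
  (2 * Complex.I)⁻¹ * ∫ y in Set.Ioi (0 : ℝ), hypInt τ z y

/-- `G_τ(z) = exp(i·γ_τ(z))` on the strip `|Re z| < 1 − τ⁻¹`. -/
def hypGammaStrip (τ : ℝ) (z : ℂ) : ℂ := Complex.exp (Complex.I * hypGammaArg τ z)

/-!
Put `w = τ (z + 1)`, so that `|Re w| < 1`. The addition formula for `sinh` turns the quotient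
`G_τ (z + 2) / G_τ z` into `E w = exp (∫ (1 / y - cosh (w y) / sinh y) dy / y)` over `(0, ∞)`.
Differentiating under the integral, the logarithmic derivative of `E` is
`-∫ sinh (w y) / sinh y dy = -(π / 2) tan (π w / 2)`: expanding `1 / sinh y` in exponentials gives
the Mittag-Leffler series of the cotangent at `(1 - w) / 2`. Hence `E w = E 0 * cos (π w / 2)`.
The duplication formula for `sinh` and the substitution `y ↦ 2 y` give `E 0 = E (1 / 2) ^ 2`, which
forces `E 0 = 2`.
-/

open Filter Asymptotics Topology

open scoped Real Nat

section SinhBounds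

lemma cosh_le_exp_abs (x : ℝ) : Real.cosh x ≤ Real.exp |x| := by
  rw [← Real.cosh_abs, ← Real.cosh_add_sinh]
  exact le_add_of_nonneg_right (Real.sinh_nonneg_iff.2 (abs_nonneg x))

lemma exp_le_four_mul_sinh {x : ℝ} (hx : 1 ≤ x) : Real.exp x ≤ 4 * Real.sinh x := by
  have hexp : x + 1 ≤ Real.exp x := Real.add_one_le_exp x
  have hexp_neg : Real.exp (-x) ≤ 1 := Real.exp_le_one_iff.2 (by linarith)
  rw [Real.sinh_eq]
  linarith

lemma norm_cosh_le_cosh_re (u : ℂ) : ‖cosh u‖ ≤ Real.cosh u.re := by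
  have h := norm_add_le (exp u) (exp (-u))
  rw [norm_exp, norm_exp, neg_re] at h
  rw [cosh, Real.cosh_eq, norm_div, Complex.norm_two]
  gcongr

lemma norm_sinh_le_cosh_re (u : ℂ) : ‖sinh u‖ ≤ Real.cosh u.re := by
  have h := norm_sub_le (exp u) (exp (-u))
  rw [norm_exp, norm_exp, neg_re] at h
  rw [sinh, Real.cosh_eq, norm_div, Complex.norm_two]
  gcongr

lemma sinh_abs_re_le_norm_sinh (u : ℂ) : Real.sinh |u.re| ≤ ‖sinh u‖ := by
  have h := abs_norm_sub_norm_le (exp u) (exp (-u))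
  rw [norm_exp, norm_exp, neg_re] at h
  rw [← Real.abs_sinh, sinh, Real.sinh_eq, norm_div, Complex.norm_two, abs_div, abs_two]
  gcongr

lemma norm_sinh_le_norm_mul_cosh_re (u : ℂ) : ‖sinh u‖ ≤ ‖u‖ * Real.cosh u.re := by
  have hconv : Convex ℝ {v : ℂ | |v.re| ≤ |u.re|} := by
    simpa only [abs_le] using! (convex_Icc (-|u.re|) |u.re|).linear_preimage reLm
  have hbound : ∀ v ∈ {v : ℂ | |v.re| ≤ |u.re|}, ‖deriv sinh v‖ ≤ Real.cosh u.re := fun v hv => by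
    rw [Complex.deriv_sinh]
    exact (norm_cosh_le_cosh_re v).trans (Real.cosh_le_cosh.2 hv)
  simpa [mul_comm] using hconv.norm_image_sub_le_of_norm_deriv_le (x := 0) (y := u)
    (fun v _ => differentiable_sinh v) hbound (by simp) (by simp)

lemma sinh_ofReal_ne_zero {x : ℝ} (hx : x ≠ 0) : sinh (x : ℂ) ≠ 0 := by
  exact_mod_cast Real.sinh_ne_zero.2 hx

end SinhBounds

section Asymptotics

lemma isBigO_sinh_sub_self_nhds_zero : (fun u : ℂ => sinh u - u) =O[𝓝 0] fun u => u ^ 3 := by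
  have h := exp_sub_sum_range_isBigO_pow 3
  have hneg : (fun u : ℂ => exp (-u) - ∑ i ∈ Finset.range 3, (-u) ^ i / i !) =O[𝓝 0]
      fun u => u ^ 3 := by
    simpa [Function.comp_def, Odd.neg_pow (by decide : Odd 3)] using
      h.comp_tendsto (continuous_neg.tendsto' (0 : ℂ) 0 neg_zero)
  refine ((h.sub hneg).const_mul_left 2⁻¹).congr_left fun u => ?_
  simp only [Finset.sum_range_succ, Finset.sum_range_zero, sinh, Nat.factorial]
  push_cast
  ring

variable (c : ℂ)

lemma tendsto_mul_ofReal_nhdsGT_zero : Tendsto (fun y : ℝ => c * y) (𝓝[>] 0) (𝓝 0) :=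
  tendsto_nhdsWithin_of_tendsto_nhds (Continuous.tendsto' (by fun_prop) 0 0 (by simp))

lemma isBigO_mul_ofReal (l : Filter ℝ) : (fun y : ℝ => c * y) =O[l] fun y => y :=
  (isBigO_of_le l fun y => by simp).const_mul_left c

lemma isBigO_sinh_mul_sub_nhdsGT_zero :
    (fun y : ℝ => sinh (c * y) - c * y) =O[𝓝[>] 0] fun y => y ^ 3 :=
  (isBigO_sinh_sub_self_nhds_zero.comp_tendsto (tendsto_mul_ofReal_nhdsGT_zero c)).trans
    ((isBigO_mul_ofReal c _).pow 3)

lemma isBigO_sinh_mul_nhdsGT_zero : (fun y : ℝ => sinh (c * y)) =O[𝓝[>] 0] fun y => y := by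
  have h : (fun u => sinh u) =O[𝓝 0] fun u : ℂ => u := by
    simpa using (hasDerivAt_sinh 0).isBigO_sub
  exact (h.comp_tendsto (tendsto_mul_ofReal_nhdsGT_zero c)).trans (isBigO_mul_ofReal c _)

variable {c}

lemma isBigO_inv_sinh_mul_nhdsGT_zero (hc : c ≠ 0) :
    (fun y : ℝ => (sinh (c * y))⁻¹) =O[𝓝[>] 0] fun y => y⁻¹ := by
  have hsinh : (fun u : ℂ => u) =O[𝓝 0] fun u => sinh u := by
    simpa [Function.comp_def] using ((hasDerivAt_sinh 0).isTheta_sub (by simp)).isBigO_symm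
  have hmul : (fun y : ℝ => y) =O[𝓝[>] 0] fun y => c * y :=
    isBigO_const_mul_right_iff hc |>.2 (isBigO_of_le _ fun y => by simp)
  refine (hmul.trans (hsinh.comp_tendsto (tendsto_mul_ofReal_nhdsGT_zero c))).inv_rev ?_
  filter_upwards [self_mem_nhdsWithin] with y hy hy0
  exact absurd hy0 (ne_of_gt hy)

variable (c) in
lemma isBigO_sinh_mul_atTop :
    (fun y : ℝ => sinh (c * y)) =O[atTop] fun y => Real.exp (|c.re| * y) := by
  refine IsBigO.of_bound 1 ?_
  filter_upwards [eventually_ge_atTop 0] with y hy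
  have hre : |(c * y).re| = |c.re| * y := by rw [re_mul_ofReal, abs_mul, abs_of_nonneg hy]
  rw [one_mul, Real.norm_eq_abs, Real.abs_exp, ← hre]
  exact (norm_sinh_le_cosh_re _).trans (cosh_le_exp_abs _)

lemma isBigO_inv_sinh_mul_atTop (hc : c.re ≠ 0) :
    (fun y : ℝ => (sinh (c * y))⁻¹) =O[atTop] fun y => Real.exp (-|c.re| * y) := by
  have hlim : Tendsto (fun y : ℝ => |c.re| * y) atTop atTop :=
    tendsto_id.const_mul_atTop (abs_pos.2 hc)
  refine IsBigO.of_bound 4 ?_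
  filter_upwards [eventually_ge_atTop 0, hlim.eventually_ge_atTop 1] with y hy hy1
  have hre : |(c * y).re| = |c.re| * y := by rw [re_mul_ofReal, abs_mul, abs_of_nonneg hy]
  have hle : Real.exp (|c.re| * y) ≤ 4 * ‖sinh (c * y)‖ := by
    have h := sinh_abs_re_le_norm_sinh (c * y)
    rw [hre] at h
    linarith [exp_le_four_mul_sinh hy1]
  have hpos : 0 < ‖sinh (c * y)‖ := by linarith [Real.exp_pos (|c.re| * y)]
  rw [norm_inv, Real.norm_eq_abs, Real.abs_exp, neg_mul, Real.exp_neg, ← div_eq_mul_inv,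
    inv_le_iff_one_le_mul₀ hpos, div_mul_eq_mul_div, one_le_div (Real.exp_pos _)]
  exact hle

end Asymptotics

lemma integrableOn_Ioi_zero_of_isBigO_rpow {E : Type*} [NormedAddCommGroup E] {f : ℝ → E} {a b : ℝ}
    (hf : ContinuousOn f (Ioi 0)) (htop : f =O[atTop] fun y => y ^ (-a)) (ha : 1 < a)
    (hzero : f =O[𝓝[>] 0] fun y => y ^ (-b)) (hb : b < 1) : IntegrableOn f (Ioi 0) := by
  have h := mellin_convergent_of_isBigO_scalar (s := 1)
    (hf.norm.locallyIntegrableOn measurableSet_Ioi) htop.norm_left ha hzero.norm_left hb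
  refine (integrable_norm_iff (hf.aestronglyMeasurable measurableSet_Ioi)).1 ?_
  simpa [IntegrableOn] using h

section HypInt

variable {τ : ℝ} {z : ℂ}

lemma continuousOn_hypInt (hτ : τ ≠ 0) : ContinuousOn (hypInt τ z) (Ioi 0) := by
  have hne (y : ℝ) (hy : y ∈ Ioi 0) : (y : ℂ) ≠ 0 := ofReal_ne_zero.2 (ne_of_gt hy)
  have hsinh (y : ℝ) (hy : y ∈ Ioi 0) : sinh (y : ℂ) * sinh (τ * y) ≠ 0 :=
    mul_ne_zero (sinh_ofReal_ne_zero (ne_of_gt hy))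
      (by exact_mod_cast sinh_ofReal_ne_zero (mul_ne_zero hτ (ne_of_gt hy)))
  unfold hypInt
  fun_prop (disch := assumption)

/- The terms of order two in the numerator over the common denominator cancel; grouped as here, each
remaining one is visibly `O(y ^ 4)` at the origin. -/
lemma hypInt_eq_mul_inv (hτ : τ ≠ 0) {y : ℝ} (hy : y ≠ 0) : hypInt τ z y =
    (z * ((sinh y - y) * sinh (τ * y) + y * (sinh (τ * y) - τ * y)) -
        y * (sinh (τ * z * y) - τ * z * y)) *
      ((y : ℂ)⁻¹ * (y : ℂ)⁻¹ * ((sinh y)⁻¹ * (sinh (τ * y))⁻¹)) := by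
  have hyc : (y : ℂ) ≠ 0 := ofReal_ne_zero.2 hy
  have hsinh : sinh (y : ℂ) ≠ 0 := sinh_ofReal_ne_zero hy
  have hsinhτ : sinh ((τ : ℂ) * y) ≠ 0 := by exact_mod_cast sinh_ofReal_ne_zero (mul_ne_zero hτ hy)
  rw [hypInt, mul_right_comm (τ : ℂ)]
  generalize sinh ((τ : ℂ) * y) = sinhτ at *
  field_simp
  ring

lemma isBigO_hypInt_nhdsGT_zero (hτ : τ ≠ 0) : hypInt τ z =O[𝓝[>] 0] fun _ => (1 : ℝ) := by
  have hτc : (τ : ℂ) ≠ 0 := ofReal_ne_zero.2 hτ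
  have hid : (fun y : ℝ => (y : ℂ)) =O[𝓝[>] 0] fun y => y := isBigO_of_le _ fun y => by simp
  have hinv : (fun y : ℝ => (y : ℂ)⁻¹) =O[𝓝[>] 0] fun y => y⁻¹ := isBigO_of_le _ fun y => by simp
  have hsub : (fun y : ℝ => sinh y - y) =O[𝓝[>] 0] fun y => y ^ 3 := by
    simpa using isBigO_sinh_mul_sub_nhdsGT_zero 1
  have hsinh : (fun y : ℝ => (sinh y)⁻¹) =O[𝓝[>] 0] fun y => y⁻¹ := by
    simpa using isBigO_inv_sinh_mul_nhdsGT_zero one_ne_zero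
  have hnum : (fun y : ℝ => z * ((sinh y - y) * sinh (τ * y) + y * (sinh (τ * y) - τ * y)) -
      y * (sinh (τ * z * y) - τ * z * y)) =O[𝓝[>] 0] fun y => y ^ 4 := by
    have h₁ := hsub.mul (isBigO_sinh_mul_nhdsGT_zero τ)
    have h₂ := hid.mul (isBigO_sinh_mul_sub_nhdsGT_zero τ)
    have h₃ := hid.mul (isBigO_sinh_mul_sub_nhdsGT_zero (τ * z))
    simp only [← pow_succ, ← pow_succ'] at h₁ h₂ h₃
    exact ((h₁.add h₂).const_mul_left z).sub h₃
  have hden := (hinv.mul hinv).mul (hsinh.mul (isBigO_inv_sinh_mul_nhdsGT_zero hτc))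
  refine (hnum.mul hden).congr' ?_ ?_
  · filter_upwards [self_mem_nhdsWithin] with y hy using (hypInt_eq_mul_inv hτ (ne_of_gt hy)).symm
  · filter_upwards [self_mem_nhdsWithin] with y (hy : 0 < y)
    field_simp

lemma isBigO_hypInt_atTop (hτ : τ ≠ 0) (hz : |z.re| < 1 + |τ|⁻¹) :
    hypInt τ z =O[atTop] fun y => y ^ (-2 : ℝ) := by
  have hrate : 0 < 1 + |τ| - |τ| * |z.re| := by
    have h := mul_lt_mul_of_pos_left hz (abs_pos.2 hτ)
    rw [mul_add, mul_inv_cancel₀ (abs_ne_zero.2 hτ)] at h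
    linarith
  have hinv : (fun y : ℝ => (y : ℂ)⁻¹) =O[atTop] fun _ => (1 : ℝ) :=
    (tendsto_inv₀_cobounded.comp (RCLike.tendsto_ofReal_atTop_cobounded ℂ)).isBigO_one ℝ
  have hsq : (fun y : ℝ => z * ((y : ℂ) ^ 2)⁻¹) =O[atTop] fun y => y ^ (-2 : ℝ) := by
    refine (isBigO_of_le _ fun y => le_of_eq ?_).const_mul_left z
    simp [Real.rpow_neg_ofNat, zpow_neg]
  have hsinh : (fun y : ℝ => (sinh y)⁻¹) =O[atTop] fun y => Real.exp (-1 * y) := by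
    simpa using isBigO_inv_sinh_mul_atTop (c := 1) (by simp)
  have hexp := (((isBigO_sinh_mul_atTop (τ * z)).mul
    (hsinh.mul (isBigO_inv_sinh_mul_atTop (c := τ) (by simpa)))).mul hinv).congr_right
      (g₂ := fun y => Real.exp (-(1 + |τ| - |τ| * |z.re|) * y)) fun y => by
    rw [mul_one, ← Real.exp_add, ← Real.exp_add, re_ofReal_mul, abs_mul, ofReal_re]
    ring_nf
  refine (hsq.sub (hexp.trans (isLittleO_exp_neg_mul_rpow_atTop hrate _).isBigO)).congr_left
    fun y => ?_
  rw [hypInt, mul_right_comm (τ : ℂ)]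
  ring

lemma integrableOn_hypInt (hτ : τ ≠ 0) (hz : |z.re| < 1 + |τ|⁻¹) :
    IntegrableOn (hypInt τ z) (Ioi 0) := by
  refine integrableOn_Ioi_zero_of_isBigO_rpow (continuousOn_hypInt hτ) (isBigO_hypInt_atTop hτ hz)
    one_lt_two ?_ zero_lt_one
  simpa using isBigO_hypInt_nhdsGT_zero hτ

end HypInt

/-- The integrand whose integral over `(0, ∞)` is a logarithm of `2 cos (π w / 2)` when
`|Re w| < 1`. -/
def logCosInt (w : ℂ) (y : ℝ) : ℂ := (1 / y - cosh (w * y) / sinh y) / y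

lemma hypInt_add_two_sub_hypInt {τ : ℝ} (hτ : τ ≠ 0) (z : ℂ) {y : ℝ} (hy : y ≠ 0) :
    hypInt τ (z + 2) y - hypInt τ z y = 2 * logCosInt (τ * (z + 1)) y := by
  have hyc : (y : ℂ) ≠ 0 := ofReal_ne_zero.2 hy
  have hsinh : sinh (y : ℂ) ≠ 0 := sinh_ofReal_ne_zero hy
  have hsinhτ : sinh ((τ : ℂ) * y) ≠ 0 := by exact_mod_cast sinh_ofReal_ne_zero (mul_ne_zero hτ hy)
  have hadd : sinh (τ * y * (z + 2)) =
      sinh (τ * y * z) + 2 * cosh (τ * (z + 1) * y) * sinh (τ * y) := by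
    rw [show (τ : ℂ) * y * (z + 2) = τ * (z + 1) * y + τ * y by ring,
      show (τ : ℂ) * y * z = τ * (z + 1) * y - τ * y by ring, sinh_add, sinh_sub]
    ring
  rw [hypInt, hypInt, logCosInt, hadd]
  generalize sinh ((τ : ℂ) * y) = sinhτ at *
  generalize sinh (τ * y * z) = sinhτz
  generalize cosh (τ * (z + 1) * y) = coshτz
  field_simp
  ring

section Strip

variable {w : ℂ}

lemma integrableOn_logCosInt (hw : |w.re| < 1) : IntegrableOn (logCosInt w) (Ioi 0) := by
  have hw' := abs_lt.1 hw
  have hadd : IntegrableOn (hypInt 1 (w - 1 + 2)) (Ioi 0) :=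
    integrableOn_hypInt one_ne_zero (by norm_num [abs_lt]; constructor <;> linarith)
  have hsub : IntegrableOn (hypInt 1 (w - 1)) (Ioi 0) :=
    integrableOn_hypInt one_ne_zero (by norm_num [abs_lt]; constructor <;> linarith)
  have hhalf : IntegrableOn (fun y => 2⁻¹ * (hypInt 1 (w - 1 + 2) y - hypInt 1 (w - 1) y))
      (Ioi 0) := (hadd.sub hsub).const_mul 2⁻¹
  refine hhalf.congr_fun (fun y hy => ?_) measurableSet_Ioi
  simp [hypInt_add_two_sub_hypInt one_ne_zero (w - 1) (ne_of_gt hy)]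

lemma cosh_mul_mul_sinh_le_sinh {r y : ℝ} (hr : 0 ≤ r) (hy : 0 ≤ y) :
    Real.cosh (r * y) * Real.sinh ((1 - r) * y) ≤ Real.sinh y := by
  have hadd : Real.sinh y = Real.sinh (r * y) * Real.cosh ((1 - r) * y) +
      Real.cosh (r * y) * Real.sinh ((1 - r) * y) := by
    rw [← Real.sinh_add]
    ring_nf
  rw [hadd]
  exact le_add_of_nonneg_left
    (mul_nonneg (Real.sinh_nonneg_iff.2 (mul_nonneg hr hy)) (Real.cosh_pos _).le)

lemma norm_sinh_mul_div_sinh_le {r y : ℝ} (hw : |w.re| ≤ r) (hr : r < 1) (hy : 0 < y) :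
    ‖sinh (w * y) / sinh y‖ ≤ ‖w‖ * (y / Real.sinh ((1 - r) * y)) := by
  have hr0 : 0 ≤ r := (abs_nonneg _).trans hw
  have hsinh : 0 < Real.sinh y := Real.sinh_pos_iff.2 hy
  have hsinhr : 0 < Real.sinh ((1 - r) * y) :=
    Real.sinh_pos_iff.2 (mul_pos (sub_pos.2 hr) hy)
  have hnum : ‖sinh (w * y)‖ ≤ ‖w‖ * y * Real.cosh (r * y) := by
    refine (norm_sinh_le_norm_mul_cosh_re _).trans ?_
    rw [norm_mul, norm_real, Real.norm_of_nonneg hy.le, re_mul_ofReal]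
    gcongr
    rw [Real.cosh_le_cosh, abs_mul, abs_mul, abs_of_nonneg hr0]
    gcongr
  rw [← ofReal_sinh, norm_div, norm_real, Real.norm_of_nonneg hsinh.le, div_le_iff₀ hsinh]
  calc ‖sinh (w * y)‖ ≤ ‖w‖ * y * Real.cosh (r * y) := hnum
    _ = ‖w‖ * (y / Real.sinh ((1 - r) * y)) *
        (Real.cosh (r * y) * Real.sinh ((1 - r) * y)) := by
      generalize Real.sinh ((1 - r) * y) = sinhr at *
      field_simp
    _ ≤ ‖w‖ * (y / Real.sinh ((1 - r) * y)) * Real.sinh y := by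
      gcongr
      exact cosh_mul_mul_sinh_le_sinh hr0 hy.le

lemma integrableOn_div_sinh_mul {c : ℝ} (hc : 0 < c) :
    IntegrableOn (fun y => y / Real.sinh (c * y)) (Ioi 0) := by
  have hcont : ContinuousOn (fun y => (Real.sinh (c * y))⁻¹) (Ioi 0) :=
    ContinuousOn.inv₀ (by fun_prop) fun y hy =>
      Real.sinh_ne_zero.2 (mul_ne_zero hc.ne' (ne_of_gt hy))
  have hofReal (l : Filter ℝ) :
      (fun y => (Real.sinh (c * y))⁻¹) =O[l] fun y : ℝ => (sinh ((c : ℂ) * y))⁻¹ :=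
    isBigO_of_le _ fun y => by rw [← norm_real]; push_cast; rfl
  have htop : (fun y => (Real.sinh (c * y))⁻¹) =O[atTop] fun y => y ^ (-3 : ℝ) := by
    have h := (hofReal _).trans (isBigO_inv_sinh_mul_atTop (c := c) (by simpa using hc.ne'))
    rw [ofReal_re, abs_of_pos hc] at h
    exact h.trans (isLittleO_exp_neg_mul_rpow_atTop hc _).isBigO
  have hzero : (fun y => (Real.sinh (c * y))⁻¹) =O[𝓝[>] 0] fun y => y ^ (-1 : ℝ) := by
    simpa only [Real.rpow_neg_one] using
      (hofReal _).trans (isBigO_inv_sinh_mul_nhdsGT_zero (ofReal_ne_zero.2 hc.ne'))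
  have h := mellin_convergent_of_isBigO_scalar (s := 2)
    (hcont.locallyIntegrableOn measurableSet_Ioi) htop (by norm_num) hzero (by norm_num)
  norm_num at h
  exact h

lemma continuousOn_sinh_mul_div_sinh : ContinuousOn (fun y : ℝ => sinh (w * y) / sinh y) (Ioi 0) :=
  ContinuousOn.div (by fun_prop) (by fun_prop) fun _ hy => sinh_ofReal_ne_zero (ne_of_gt hy)

lemma integrableOn_sinh_mul_div_sinh (hw : |w.re| < 1) :
    IntegrableOn (fun y : ℝ => sinh (w * y) / sinh y) (Ioi 0) :=
  ((integrableOn_div_sinh_mul (sub_pos.2 hw)).const_mul ‖w‖).mono'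
    (continuousOn_sinh_mul_div_sinh.aestronglyMeasurable measurableSet_Ioi)
    (ae_restrict_of_forall_mem measurableSet_Ioi fun _ hy =>
      norm_sinh_mul_div_sinh_le le_rfl hw hy)

lemma hasDerivAt_logCosInt (w : ℂ) {y : ℝ} (hy : y ≠ 0) :
    HasDerivAt (fun v => logCosInt v y) (-(sinh (w * y) / sinh y)) w := by
  have hyc : (y : ℂ) ≠ 0 := ofReal_ne_zero.2 hy
  have h := (((hasDerivAt_mul_const (y : ℂ) (x := w)).ccosh.div_const (sinh y)).const_sub
    (1 / (y : ℂ))).div_const (y : ℂ)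
  refine h.congr_deriv ?_
  field_simp

lemma hasDerivAt_integral_logCosInt (hw : |w.re| < 1) :
    HasDerivAt (fun v => ∫ y in Ioi 0, logCosInt v y)
      (-∫ y : ℝ in Ioi 0, sinh (w * y) / sinh y) w := by
  obtain ⟨r, hwr, hr⟩ := exists_between hw
  have hstrip (t : ℝ) (ht : |w.re| < t) : {v : ℂ | |v.re| < t} ∈ 𝓝 w :=
    (isOpen_lt continuous_re.abs continuous_const).mem_nhds ht
  have hnhds : {v : ℂ | |v.re| < r ∧ ‖v‖ < ‖w‖ + 1} ∈ 𝓝 w :=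
    inter_mem (hstrip r hwr) ((isOpen_lt continuous_norm continuous_const).mem_nhds
      (lt_add_one ‖w‖))
  rw [← integral_neg]
  refine (hasDerivAt_integral_of_dominated_loc_of_deriv_le hnhds
    (F' := fun v y => -(sinh (v * y) / sinh y))
    (bound := fun y => (‖w‖ + 1) * (y / Real.sinh ((1 - r) * y))) ?_
    (integrableOn_logCosInt hw) (integrableOn_sinh_mul_div_sinh hw).neg.aestronglyMeasurable ?_
    ((integrableOn_div_sinh_mul (sub_pos.2 hr)).const_mul _) ?_).2
  · filter_upwards [hstrip 1 hw] with v hv using (integrableOn_logCosInt hv).aestronglyMeasurable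
  · refine ae_restrict_of_forall_mem measurableSet_Ioi fun y hy v ⟨hvr, hvw⟩ => ?_
    have hsinh : 0 ≤ y / Real.sinh ((1 - r) * y) :=
      div_nonneg (le_of_lt hy)
        (Real.sinh_nonneg_iff.2 (mul_nonneg (sub_nonneg.2 hr.le) (le_of_lt hy)))
    rw [norm_neg]
    exact (norm_sinh_mul_div_sinh_le hvr.le hr hy).trans (by gcongr)
  · exact ae_restrict_of_forall_mem measurableSet_Ioi fun y hy v _ =>
      hasDerivAt_logCosInt v (ne_of_gt hy)

end Strip

lemma hasSum_inv_sinh {y : ℝ} (hy : 0 < y) :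
    HasSum (fun n : ℕ => 2 * Real.exp (-(2 * n + 1) * y)) (Real.sinh y)⁻¹ := by
  have hlt : Real.exp (-2 * y) < 1 := Real.exp_lt_one_iff.2 (by linarith)
  have h := (hasSum_geometric_of_lt_one (Real.exp_pos _).le hlt).mul_left (2 * Real.exp (-y))
  have hsinh : (Real.sinh y)⁻¹ = 2 * Real.exp (-y) * (1 - Real.exp (-2 * y))⁻¹ := by
    have hne : Real.exp y ≠ 0 := Real.exp_ne_zero y
    rw [Real.sinh_eq, show -2 * y = -y + -y by ring, Real.exp_add, Real.exp_neg]
    field_simp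
  rw [hsinh]
  refine h.congr_fun fun n => ?_
  rw [← Real.exp_nat_mul, mul_assoc, ← Real.exp_add]
  ring_nf

lemma integral_two_mul_exp_neg_mul_sinh {a w : ℂ} (h : |w.re| < a.re) :
    ∫ y : ℝ in Ioi 0, 2 * exp (-a * y) * sinh (w * y) = 1 / (a - w) - 1 / (a + w) := by
  have hw := abs_lt.1 h
  have hsub : (w - a).re < 0 := by rw [sub_re]; linarith
  have hadd : (-w - a).re < 0 := by rw [sub_re, neg_re]; linarith
  calc ∫ y : ℝ in Ioi 0, 2 * exp (-a * y) * sinh (w * y)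
      = ∫ y : ℝ in Ioi 0, (exp ((w - a) * y) - exp ((-w - a) * y)) := by
        congr 1 with y
        rw [sinh, show (w - a) * y = -a * y + w * y by ring,
          show (-w - a) * y = -a * y + -(w * y) by ring, exp_add, exp_add]
        ring
    _ = 1 / (a - w) - 1 / (a + w) := by
        rw [integral_sub (integrableOn_exp_mul_complex_Ioi hsub 0)
          (integrableOn_exp_mul_complex_Ioi hadd 0), integral_exp_mul_complex_Ioi hsub,
          integral_exp_mul_complex_Ioi hadd, ofReal_zero, mul_zero, mul_zero, exp_zero,
          ← neg_sub a w, ← neg_add' w a, neg_div_neg_eq, neg_div_neg_eq, add_comm w a]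

lemma hasSum_integral_sinh_mul_div_sinh {w : ℂ} (hw : |w.re| < 1) :
    HasSum (fun n : ℕ => 1 / (2 * n + 1 - w) - 1 / (2 * n + 1 + w))
      (∫ y : ℝ in Ioi 0, sinh (w * y) / sinh y) := by
  have hterm (n : ℕ) : ∫ y : ℝ in Ioi 0, 2 * exp (-(2 * n + 1) * y) * sinh (w * y) =
      1 / (2 * n + 1 - w) - 1 / (2 * n + 1 + w) := by
    refine integral_two_mul_exp_neg_mul_sinh (hw.trans_le ?_)
    simp
  have hnorm {y : ℝ} (hy : 0 < y) : HasSum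
      (fun n : ℕ => ‖2 * exp (-(2 * n + 1) * y) * sinh (w * y)‖) ‖sinh (w * y) / sinh y‖ := by
    rw [div_eq_inv_mul, norm_mul, ← ofReal_sinh, ← ofReal_inv, norm_real,
      Real.norm_of_nonneg (inv_nonneg.2 (Real.sinh_nonneg_iff.2 hy.le))]
    refine ((hasSum_inv_sinh hy).mul_right _).congr_fun fun n => ?_
    simp [norm_exp]
  simp only [← hterm]
  refine hasSum_integral_of_dominated_convergence
    (fun (n : ℕ) (y : ℝ) => ‖2 * exp (-(2 * n + 1) * y) * sinh (w * y)‖)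
    (fun n => (Continuous.aestronglyMeasurable (by fun_prop)))
    (fun n => ae_of_all _ fun y => le_rfl) ?_ ?_ ?_
  · exact ae_restrict_of_forall_mem measurableSet_Ioi fun y hy => (hnorm hy).summable
  · exact IntegrableOn.congr_fun (integrableOn_sinh_mul_div_sinh hw).norm
      (fun y hy => (hnorm hy).tsum_eq.symm) measurableSet_Ioi
  · refine ae_restrict_of_forall_mem measurableSet_Ioi fun y hy => ?_
    rw [div_eq_inv_mul]
    refine HasSum.mul_right _ ?_
    exact_mod_cast hasSum_ofReal.2 (hasSum_inv_sinh hy)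

lemma tendsto_sum_one_div_add_nat_pi_mul_cot {s : ℂ} (hs : s ∈ integerComplement) :
    Tendsto (fun N : ℕ => ∑ n ∈ Finset.range N, (1 / (s + n) + 1 / (s - (n + 1)))) atTop
      (𝓝 (π * cot (π * s))) := by
  have htel (N : ℕ) : ∑ n ∈ Finset.range N, (1 / (s + n) + 1 / (s - (n + 1))) =
      ∑ n ∈ Finset.range N, cotTerm s n + (1 / s - (s + N)⁻¹) := by
    induction N with
    | zero => simp
    | succ N ih =>
      rw [Finset.sum_range_succ, Finset.sum_range_succ, ih, cotTerm]
      push_cast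
      ring
  have hinv : Tendsto (fun N : ℕ => (s + N)⁻¹) atTop (𝓝 0) :=
    tendsto_inv₀_cobounded.comp ((tendsto_const_add_cobounded s).comp
      tendsto_natCast_atTop_cobounded)
  simpa only [htel, sub_zero, sub_add_cancel] using
    (tendsto_logDeriv_euler_cot_sub hs).add (hinv.const_sub (1 / s))

section Strip

variable {w : ℂ}

lemma one_sub_div_two_mem_integerComplement (hw : |w.re| < 1) :
    (1 - w) / 2 ∈ integerComplement := by
  rintro ⟨n, hn⟩
  have hre : w.re = 1 - 2 * n := by
    have h : w = 1 - 2 * n := by linear_combination 2 * hn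
    simpa using congrArg re h
  rw [hre, abs_lt] at hw
  have hpos : (0 : ℝ) < n := by linarith
  have hlt : (n : ℝ) < 1 := by linarith
  norm_cast at hpos hlt
  omega

lemma pi_mul_one_sub_div_two (w : ℂ) : π * ((1 - w) / 2) = π / 2 - π * w / 2 := by ring

lemma cos_pi_mul_div_two_ne_zero (hw : |w.re| < 1) : cos (π * w / 2) ≠ 0 := by
  have h := sin_pi_mul_ne_zero (one_sub_div_two_mem_integerComplement hw)
  rwa [pi_mul_one_sub_div_two, sin_pi_div_two_sub] at h

lemma integral_sinh_mul_div_sinh (hw : |w.re| < 1) :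
    ∫ y : ℝ in Ioi 0, sinh (w * y) / sinh y = π / 2 * tan (π * w / 2) := by
  have hcot := (tendsto_sum_one_div_add_nat_pi_mul_cot
    (one_sub_div_two_mem_integerComplement hw)).const_mul (1 / 2)
  rw [pi_mul_one_sub_div_two, cot_eq_cos_div_sin, cos_pi_div_two_sub, sin_pi_div_two_sub,
    ← tan_eq_sin_div_cos] at hcot
  have h := tendsto_nhds_unique (hasSum_integral_sinh_mul_div_sinh hw).tendsto_sum_nat
    (hcot.congr fun N => ?_)
  · rw [h]
    ring
  rw [Finset.mul_sum]
  refine Finset.sum_congr rfl fun n _ => ?_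
  rw [show 2 * (n : ℂ) + 1 - w = 2 * ((1 - w) / 2 + n) by ring,
    show 2 * (n : ℂ) + 1 + w = -(2 * ((1 - w) / 2 - (n + 1))) by ring]
  simp only [one_div, mul_inv, inv_neg]
  ring

lemma exp_integral_logCosInt_eq_mul_cos (hw : |w.re| < 1) :
    exp (∫ y in Ioi 0, logCosInt w y) = exp (∫ y in Ioi 0, logCosInt 0 y) * cos (π * w / 2) := by
  have hopen : IsOpen {v : ℂ | |v.re| < 1} := isOpen_lt continuous_re.abs continuous_const
  have hconv : Convex ℝ {v : ℂ | |v.re| < 1} := by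
    simpa only [abs_lt] using! (convex_Ioo (-1 : ℝ) 1).linear_preimage reLm
  have hderiv : ∀ v ∈ {v : ℂ | |v.re| < 1},
      HasDerivAt (fun v => exp (-∫ y in Ioi 0, logCosInt v y) * cos (π * v / 2)) 0 v := by
    intro v hv
    have hcos : HasDerivAt (fun v : ℂ => cos (π * v / 2)) (-sin (π * v / 2) * (π / 2)) v := by
      simpa using (((hasDerivAt_id v).const_mul (π : ℂ)).div_const 2).ccos
    refine ((hasDerivAt_integral_logCosInt hv).fun_neg.cexp.mul hcos).congr_deriv ?_
    rw [integral_sinh_mul_div_sinh hv, ← tan_mul_cos (cos_pi_mul_div_two_ne_zero hv)]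
    ring
  have hconst := hopen.is_const_of_deriv_eq_zero hconv.isPreconnected
    (fun v hv => (hderiv v hv).differentiableAt.differentiableWithinAt)
    (fun v hv => (hderiv v hv).deriv) (x := w) (y := 0) hw (by simp)
  simp only [mul_zero, zero_div, cos_zero, mul_one, exp_neg] at hconst
  have hw0 := exp_ne_zero (∫ y in Ioi 0, logCosInt w y)
  have h0 := exp_ne_zero (∫ y in Ioi 0, logCosInt 0 y)
  field_simp at hconst
  linear_combination -hconst

lemma logCosInt_zero {y : ℝ} (hy : y ≠ 0) : logCosInt 0 y = 4 * logCosInt (1 / 2) (2 * y) := by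
  have hyc : (y : ℂ) ≠ 0 := ofReal_ne_zero.2 hy
  have hsinh : sinh (y : ℂ) ≠ 0 := sinh_ofReal_ne_zero hy
  have hcosh : cosh (y : ℂ) ≠ 0 := by exact_mod_cast (Real.cosh_pos y).ne'
  have hhalf : (1 / 2 : ℂ) * (2 * y) = y := by ring
  simp only [logCosInt, ofReal_mul, ofReal_ofNat, hhalf, sinh_two_mul, zero_mul, cosh_zero]
  field_simp
  ring

lemma integral_logCosInt_zero :
    ∫ y in Ioi 0, logCosInt 0 y = 2 * ∫ y in Ioi 0, logCosInt (1 / 2) y := by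
  have hscale := integral_comp_mul_left_Ioi (logCosInt (1 / 2)) 0 two_pos
  calc ∫ y in Ioi 0, logCosInt 0 y = ∫ y in Ioi 0, 4 * logCosInt (1 / 2) (2 * y) :=
        setIntegral_congr_fun measurableSet_Ioi fun y hy => logCosInt_zero (ne_of_gt hy)
    _ = 2 * ∫ y in Ioi 0, logCosInt (1 / 2) y := by
        rw [integral_const_mul, hscale, mul_zero, real_smul]
        push_cast
        ring

lemma exp_integral_logCosInt_zero : exp (∫ y in Ioi 0, logCosInt 0 y) = 2 := by
  have hhalf := exp_integral_logCosInt_eq_mul_cos (w := 1 / 2) (by norm_num)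
  have hcos : cos (π * (1 / 2) / 2) ^ 2 = 1 / 2 := by
    rw [cos_sq, show 2 * (π * (1 / 2) / 2) = (π / 2 : ℂ) by ring, cos_pi_div_two]
    ring
  have hsq : exp (∫ y in Ioi 0, logCosInt 0 y) = exp (∫ y in Ioi 0, logCosInt (1 / 2) y) ^ 2 := by
    rw [integral_logCosInt_zero, two_mul, exp_add, sq]
  rw [hhalf, mul_pow, hcos] at hsq
  have hne := exp_ne_zero (∫ y in Ioi 0, logCosInt 0 y)
  field_simp at hsq
  exact hsq.symm

lemma exp_integral_logCosInt (hw : |w.re| < 1) :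
    exp (∫ y in Ioi 0, logCosInt w y) = 2 * cos (π * w / 2) := by
  rw [exp_integral_logCosInt_eq_mul_cos hw, exp_integral_logCosInt_zero]

end Strip

theorem hyperbolic_gamma_difference_equation_general {τ : ℝ} (hτ : τ ≠ 0) {z : ℂ}
    (hz : |z.re| < 1 + |τ|⁻¹) (hz2 : |(z + 2).re| < 1 + |τ|⁻¹) :
    hypGammaStrip τ (z + 2) = 2 * cos (π * (z + 1) * τ / 2) * hypGammaStrip τ z := by
  have hw : |(τ * (z + 1)).re| < 1 := by
    rw [re_ofReal_mul, abs_mul, ← lt_inv_mul_iff₀ (abs_pos.2 hτ), mul_one, abs_lt]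
    rw [abs_lt] at hz hz2
    simp only [add_re, one_re, re_ofNat] at hz2 ⊢
    constructor <;> linarith
  have hint : ∫ y in Ioi 0, hypInt τ (z + 2) y =
      2 * (∫ y in Ioi 0, logCosInt (τ * (z + 1)) y) + ∫ y in Ioi 0, hypInt τ z y := by
    rw [← sub_eq_iff_eq_add, ← integral_const_mul,
      ← integral_sub (integrableOn_hypInt hτ hz2) (integrableOn_hypInt hτ hz)]
    exact setIntegral_congr_fun measurableSet_Ioi fun y hy =>
      hypInt_add_two_sub_hypInt hτ z (ne_of_gt hy)
  rw [hypGammaStrip, hypGammaStrip, show (π * (z + 1) * τ / 2 : ℂ) = π * (τ * (z + 1)) / 2 by ring,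
    ← exp_integral_logCosInt hw, ← exp_add, hypGammaArg, hypGammaArg, hint]
  congr 1
  field_simp

/-- The hyperbolic gamma function satisfies the first order difference equation
`G_τ(z+2) = 2·cos(π(z+1)τ/2)·G_τ(z)` on the strip. -/
theorem hyperbolic_gamma_difference_equation (τ : ℝ) (hτ : τ < 0) (z : ℂ)
    (hz : |z.re| < 1 - τ⁻¹) (hz2 : |(z + 2).re| < 1 - τ⁻¹) :
    hypGammaStrip τ (z + 2) =
      2 * Complex.cos ((Real.pi : ℂ) * (z + 1) * (τ : ℂ) / 2) * hypGammaStrip τ z := by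
  rw [sub_eq_add_neg, ← inv_neg, ← abs_of_neg hτ] at hz hz2
  exact hyperbolic_gamma_difference_equation_general hτ.ne hz hz2
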